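/- Let H be a separable real Hilbert space and let μ be a Gaussian Borel probability measure on H which is nondegenerate, in the sense that for every nonzero continuous linear functional L : H → ℝ the variance of L under μ is strictly positive. Then every Borel-measurable set E ⊆ H with μ(E) = 1 is dense in H. -/

import Mathlib

open MeasureTheory ProbabilityTheory
open scoped NNReal ENNReal

open Topology UniformSpace

/-!
A nondegenerate Gaussian measure `μ` charges every nonempty open set. If `μ` is centered, then
`μ.prod μ` is invariant under the rotations of `E × E`, so the support of `μ` is closed under
`(x, y) ↦ cos θ • x + sin θ • y`, which makes it a closed subspace. Were it proper, Hahn–Banach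
would give a nonzero functional vanishing almost everywhere, whose variance is `0`. Subtracting the
mean reduces to the centered case; as the mean may only exist in the completion of `E`, we first
push `μ` forward there.
-/

section Support

variable {X Y : Type*} [TopologicalSpace X] [TopologicalSpace Y] [MeasurableSpace X]
  [MeasurableSpace Y] {μ : Measure X} {ν : Measure Y} {x : X} {y : Y}

lemma apply_mem_support_map {f : X → Y} (hf : AEMeasurable f μ) (hfx : ContinuousAt f x)
    (hx : x ∈ μ.support) : f x ∈ (μ.map f).support := by
  rw [Measure.mem_support_iff_forall] at hx ⊢
  exact fun U hU ↦ (hx _ (hfx hU)).trans_le (Measure.le_map_apply hf U)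

lemma mk_mem_support_prod [SFinite ν] (hx : x ∈ μ.support) (hy : y ∈ ν.support) :
    (x, y) ∈ (μ.prod ν).support := by
  rw [Measure.mem_support_iff_forall] at hx hy ⊢
  intro W hW
  obtain ⟨U, hU, V, hV, hUVW⟩ := mem_nhds_prod_iff.1 hW
  calc 0 < μ U * ν V := ENNReal.mul_pos (hx U hU).ne' (hy V hV).ne'
    _ = μ.prod ν (U ×ˢ V) := (Measure.prod_prod U V).symm
    _ ≤ μ.prod ν W := measure_mono hUVW

lemma isOpenPosMeasure_of_support_eq_univ (h : μ.support = Set.univ) : μ.IsOpenPosMeasure := by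
  refine ⟨fun U hU ⟨x, hxU⟩ ↦ ?_⟩
  have hx : x ∈ μ.support := h ▸ Set.mem_univ x
  exact ((Measure.mem_support_iff_forall x).1 hx U (hU.mem_nhds hxU)).ne'

lemma isOpenPosMeasure_of_map_of_isInducing [OpensMeasurableSpace X] [BorelSpace Y] {f : X → Y}
    (hf : IsInducing f) [(μ.map f).IsOpenPosMeasure] : μ.IsOpenPosMeasure := by
  refine ⟨fun U hU ⟨x, hxU⟩ ↦ ?_⟩
  obtain ⟨V, hV, rfl⟩ := hf.isOpen_iff.1 hU
  rw [← Measure.map_apply hf.continuous.measurable hV.measurableSet]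
  exact hV.measure_ne_zero _ ⟨f x, hxU⟩

lemma dense_of_measure_eq_one [OpensMeasurableSpace X] [IsProbabilityMeasure μ]
    [μ.IsOpenPosMeasure] {s : Set X} (hs : μ s = 1) : Dense s := by
  rw [dense_iff_closure_eq, ← isClosed_closure.measure_eq_one_iff_eq_univ (μ := μ)]
  exact le_antisymm prob_le_one (hs.symm.trans_le (measure_mono subset_closure))

end Support

lemma exists_submodule_coe_eq_of_cos_smul_add_sin_smul_mem {E : Type*} [AddCommGroup E]
    [Module ℝ E] {s : Set E} (hs : s.Nonempty)
    (hrot : ∀ x ∈ s, ∀ y ∈ s, ∀ θ : ℝ, Real.cos θ • x + Real.sin θ • y ∈ s) :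
    ∃ S : Submodule ℝ E, (S : Set E) = s := by
  have neg_mem : ∀ x ∈ s, -x ∈ s := fun x hx ↦ by simpa using hrot x hx x hx Real.pi
  have zero_mem : (0 : E) ∈ s := by
    obtain ⟨x, hx⟩ := hs
    simpa using hrot x hx (-x) (neg_mem x hx) (Real.pi / 4)
  have sqrt_two_smul_mem : ∀ x ∈ s, √2 • x ∈ s := fun x hx ↦ by
    simpa [← add_smul] using hrot x hx x hx (Real.pi / 4)
  have add_mem : ∀ x ∈ s, ∀ y ∈ s, x + y ∈ s := fun x hx y hy ↦ by
    simpa [smul_smul, div_mul_eq_mul_div] using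
      hrot _ (sqrt_two_smul_mem x hx) _ (sqrt_two_smul_mem y hy) (Real.pi / 4)
  have smul_mem_of_abs_le_one : ∀ t : ℝ, |t| ≤ 1 → ∀ x ∈ s, t • x ∈ s := fun t ht x hx ↦ by
    obtain ⟨ht₁, ht₂⟩ := abs_le.1 ht
    simpa [Real.cos_arccos ht₁ ht₂] using hrot x hx 0 zero_mem (Real.arccos t)
  let A : AddSubmonoid E := ⟨⟨s, fun {x y} hx hy ↦ add_mem x hx y hy⟩, zero_mem⟩
  have smul_mem : ∀ c : ℝ, ∀ x ∈ s, c • x ∈ s := fun c x hx ↦ by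
    obtain ⟨n, hn⟩ := exists_nat_gt |c|
    have hn_pos : (0 : ℝ) < n := (abs_nonneg c).trans_lt hn
    have hcn : |c / n| ≤ 1 := by
      rw [abs_div, Nat.abs_cast]
      exact div_le_one_of_le₀ hn.le hn_pos.le
    have hmem : n • (c / n) • x ∈ A := A.nsmul_mem (smul_mem_of_abs_le_one _ hcn x hx) n
    rwa [← Nat.cast_smul_eq_nsmul ℝ, smul_smul, mul_div_cancel₀ _ hn_pos.ne'] at hmem
  exact ⟨{ A with smul_mem' := fun c x hx ↦ smul_mem c x hx }, rfl⟩

lemma exists_strongDual_ne_zero_forall_mem_eq_zero {E : Type*} [TopologicalSpace E]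
    [AddCommGroup E] [Module ℝ E] [IsTopologicalAddGroup E] [ContinuousSMul ℝ E]
    [LocallyConvexSpace ℝ E] {S : Submodule ℝ E} (hS : IsClosed (S : Set E)) (hS_top : S ≠ ⊤) :
    ∃ L : StrongDual ℝ E, L ≠ 0 ∧ ∀ x ∈ S, L x = 0 := by
  obtain ⟨z, -, hz⟩ := SetLike.exists_of_lt hS_top.lt_top
  obtain ⟨L, u, hLS, hLz⟩ := geometric_hahn_banach_closed_point S.convex hS hz
  have hLz_pos : 0 < L z := (L.map_zero ▸ hLS 0 S.zero_mem).trans hLz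
  refine ⟨L, fun hL ↦ hLz_pos.ne' (by simp [hL]), fun x hx ↦ ?_⟩
  by_contra hLx
  have hu : L ((u / L x) • x) < u := hLS _ (S.smul_mem _ hx)
  simp [hLx] at hu

section Gaussian

variable {E : Type*} [NormedAddCommGroup E] [NormedSpace ℝ E] [SecondCountableTopology E]
  [MeasurableSpace E] [BorelSpace E] {μ : Measure E} [IsGaussian μ]

lemma cos_smul_add_sin_smul_mem_support_of_isGaussian [CompleteSpace E] (hμ : μ[id] = 0) {x y : E}
    (hx : x ∈ μ.support) (hy : y ∈ μ.support) (θ : ℝ) :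
    Real.cos θ • x + Real.sin θ • y ∈ μ.support := by
  have hrot : ContinuousLinearMap.rotation θ (x, y) ∈ (μ.prod μ).support := by
    rw [← IsGaussian.map_rotation_eq_self hμ θ]
    exact apply_mem_support_map (by fun_prop) (by fun_prop) (mk_mem_support_prod hx hy)
  simpa [ContinuousLinearMap.rotation_apply] using
    apply_mem_support_map (f := Prod.fst) (by fun_prop) (by fun_prop) hrot

lemma isOpenPosMeasure_of_isGaussian_of_integral_id_eq_zero [CompleteSpace E] (hμ : μ[id] = 0)
    (hvar : ∀ L : StrongDual ℝ E, L ≠ 0 → 0 < Var[L; μ]) : μ.IsOpenPosMeasure := by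
  obtain ⟨S, hS⟩ := exists_submodule_coe_eq_of_cos_smul_add_sin_smul_mem
    (Measure.nonempty_support (IsProbabilityMeasure.ne_zero μ))
    fun x hx y hy θ ↦ cos_smul_add_sin_smul_mem_support_of_isGaussian hμ hx hy θ
  suffices hS_top : S = ⊤ from isOpenPosMeasure_of_support_eq_univ (by simp [← hS, hS_top])
  by_contra hS_top
  obtain ⟨L, hL, hLS⟩ := exists_strongDual_ne_zero_forall_mem_eq_zero
    (hS ▸ Measure.isClosed_support) hS_top
  have hS_ae : (S : Set E) ∈ ae μ := hS ▸ Measure.support_mem_ae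
  have hL_ae : L =ᵐ[μ] 0 := Filter.mem_of_superset hS_ae hLS
  have hvar_zero : Var[L; μ] = 0 := by rw [variance_congr hL_ae, variance_zero]
  exact (hvar L hL).ne' hvar_zero

lemma isOpenPosMeasure_of_isGaussian_of_variance_pos_of_completeSpace [CompleteSpace E]
    (hvar : ∀ L : StrongDual ℝ E, L ≠ 0 → 0 < Var[L; μ]) : μ.IsOpenPosMeasure := by
  let m := μ[id]
  let ν := μ.map (fun x ↦ x - m)
  have hν_mean : ν[id] = 0 := by
    rw [integral_map (by fun_prop) (by fun_prop)]
    calc ∫ x, x - m ∂μ = ∫ x, x ∂μ - ∫ _, m ∂μ :=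
          integral_sub IsGaussian.integrable_id (integrable_const m)
      _ = 0 := by simp [m]
  have hν_var : ∀ L : StrongDual ℝ E, L ≠ 0 → 0 < Var[L; ν] := fun L hL ↦ by
    have hL_sub : L ∘ (fun x ↦ x - m) = fun x ↦ L x - L m := funext fun x ↦ L.map_sub x m
    rw [variance_map (by fun_prop) (by fun_prop), hL_sub, variance_sub_const (by fun_prop)]
    exact hvar L hL
  have : ν.IsOpenPosMeasure :=
    isOpenPosMeasure_of_isGaussian_of_integral_id_eq_zero hν_mean hν_var
  have hμ_eq : μ = ν.map (fun x ↦ x + m) := by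
    rw [Measure.map_map (by fun_prop) (by fun_prop)]
    simp [Function.comp_def]
  rw [hμ_eq]
  exact (continuous_add_const m).isOpenPosMeasure_map (add_right_surjective m)

lemma isOpenPosMeasure_of_isGaussian_of_variance_pos
    (hvar : ∀ L : StrongDual ℝ E, L ≠ 0 → 0 < Var[L; μ]) : μ.IsOpenPosMeasure := by
  let ι : E →L[ℝ] Completion E := Completion.toComplL
  have hι : IsDenseInducing ι := Completion.isDenseInducing_coe
  borelize (Completion E)
  have : SecondCountableTopology (Completion E) := secondCountable_of_separable _
  have hι_var : ∀ L : StrongDual ℝ (Completion E), L ≠ 0 → 0 < Var[L; μ.map ι] := fun L hL ↦ by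
    rw [variance_map (by fun_prop) (by fun_prop)]
    refine hvar (L ∘L ι) fun hLι ↦ hL (DFunLike.coe_injective ?_)
    exact hι.dense.equalizer L.continuous continuous_zero (congrArg DFunLike.coe hLι)
  have : (μ.map ι).IsOpenPosMeasure :=
    isOpenPosMeasure_of_isGaussian_of_variance_pos_of_completeSpace hι_var
  exact isOpenPosMeasure_of_map_of_isInducing hι.isInducing

theorem full_measure_set_dense_of_nondegenerate_gaussian_general
    (hvar : ∀ L : StrongDual ℝ E, L ≠ 0 → 0 < Var[L; μ]) {s : Set E} (hs : μ s = 1) :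
    Dense s :=
  have : μ.IsOpenPosMeasure := isOpenPosMeasure_of_isGaussian_of_variance_pos hvar
  dense_of_measure_eq_one hs

end Gaussian

/-- **Itô's density lemma.** If `μ` is a nondegenerate Gaussian Borel probability measure on a
separable real Hilbert space `H` (every continuous linear functional pushes `μ` forward to a
Gaussian measure on `ℝ`, and the variance of every nonzero functional is strictly positive),
then every Borel set of full measure is dense in `H`. -/
theorem full_measure_set_dense_of_nondegenerate_gaussian
    {H : Type*} [NormedAddCommGroup H] [InnerProductSpace ℝ H] [CompleteSpace H]
    [SecondCountableTopology H] [MeasurableSpace H] [BorelSpace H]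
    (μ : Measure H) [IsProbabilityMeasure μ]
    (hGauss : ∀ L : H →L[ℝ] ℝ, ∃ (m : ℝ) (v : ℝ≥0), μ.map L = gaussianReal m v)
    (hnondeg : ∀ L : H →L[ℝ] ℝ, L ≠ 0 →
      0 < ∫ x, (L x - ∫ y, L y ∂μ) ^ 2 ∂μ)
    (E : Set H) (hE : MeasurableSet E) (hμE : μ E = 1) :
    Dense E := by
  have : IsGaussian μ := isGaussian_of_map_eq_gaussianReal hGauss
  exact full_measure_set_dense_of_nondegenerate_gaussian_general
    (fun L hL ↦ (hnondeg L hL).trans_eq (variance_eq_integral (by fun_prop)).symm) hμE
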